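/- Let R be a regular domain with a generalized regular system of parameters x = x_1,…,x_p, and let I, J ⊆ R be ideals. Then Γ_x(IJ) = Γ_x(I) + Γ_x(J), where + denotes the Minkowski sum. -/

import Mathlib

/-!
Write `P = (x_1, …, x_p)`. Since `x` is a permutable regular sequence,
`(x_1^{a_1+1}, …, x_p^{a_p+1}) : x^a = P`, so modulo `(x_1^{a_1+1}, …, x_p^{a_p+1})` one can decide
whether `x^a` occurs in `f` with a coefficient outside `P` and no proper divisor of `x^a` does.
These exponents `a` form `supp(f)`; that they suffice to represent `f` is Krull's intersection
theorem in the localization at `P`. Hence `supp(I)` is closed under increasing exponents, and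
`supp(IJ) ⊆ supp(I) + supp(J)`.

For the converse inclusion of polyhedra, the convex hull of `supp(IJ)` is closed, being a polytope
plus the nonnegative orthant. If it misses `a + b` with `a ∈ supp(I)` and `b ∈ supp(J)`, a
nonnegative linear form `ψ` separates them. Minimize `ψ` on `supp(I)` and on `supp(J)`, breaking
ties lexicographically: the resulting product monomial is divisible by no other product of
monomials from `I` and `J`, so its coefficient cannot cancel, and its exponent lies in `supp(IJ)`
although `ψ` is at most `ψ(a + b)` there.
-/

open Ideal Set Pointwise

noncomputable section

namespace NND

variable {R : Type*} [CommRing R] {p : ℕ}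

/-- The monomial `x^a = x 0 ^ a 0 * ⋯` in the elements `x`. -/
def mono (x : Fin p → R) (a : Fin p → ℕ) : R := ∏ i, x i ^ a i

/-- A (commutative) ring is regular local if it is Noetherian local and its maximal ideal
can be generated by `dim R` elements. -/
def IsRegularLocal (A : Type*) [CommRing A] : Prop :=
  IsNoetherianRing A ∧ ∃ h : IsLocalRing A, ∃ s : Finset A,
    Ideal.span (s : Set A) = @IsLocalRing.maximalIdeal A _ h ∧
    (s.card : WithBot (WithTop ℕ)) = ringKrullDim A

/-- A regular domain: an integral domain whose localization at every prime is regular local. -/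
def IsRegularDomain (A : Type*) [CommRing A] : Prop :=
  IsDomain A ∧ ∀ (P : Ideal A) (hP : P.IsPrime), IsRegularLocal (@Localization.AtPrime A _ P hP)

/-- `x` is a regular sequence. -/
def IsRegSeq (x : Fin p → R) : Prop :=
  Ideal.span (Set.range x) ≠ ⊤ ∧
  ∀ i : Fin p, ∀ r : R, r * x i ∈ Ideal.span (x '' {j | j < i}) →
    r ∈ Ideal.span (x '' {j | j < i})

/-- A generalized regular system of parameters: a permutable regular sequence all of whose
subquotients are regular domains. -/
def IsGRSOP (x : Fin p → R) : Prop :=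
  (∀ σ : Equiv.Perm (Fin p), IsRegSeq (x ∘ σ)) ∧
  ∀ S : Set (Fin p), IsRegularDomain (R ⧸ Ideal.span (x '' S))

/-- `A` is the exponent set of a monomial representation of `f`:
`h * f = ∑_{a ∈ A} r a * x^a` with `h` and the `r a` outside `(x_1, …, x_p)`. -/
def IsMonRep (x : Fin p → R) (f : R) (A : Finset (Fin p → ℕ)) : Prop :=
  ∃ (h : R) (r : (Fin p → ℕ) → R),
    h ∉ Ideal.span (Set.range x) ∧ (∀ a ∈ A, r a ∉ Ideal.span (Set.range x)) ∧
    h * f = ∑ a ∈ A, r a * mono x a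

/-- A minimal (irredundant) monomial representation: no monomial divides another. -/
def IsMinMonRep (x : Fin p → R) (f : R) (A : Finset (Fin p → ℕ)) : Prop :=
  IsMonRep x f A ∧ ∀ a ∈ A, ∀ b ∈ A, a ≠ b → ¬ mono x a ∣ mono x b

open Classical in
/-- The support of `f`: the exponent set of its (unique) minimal monomial representation. -/
def supp (x : Fin p → R) (f : R) : Set (Fin p → ℕ) :=
  if h : ∃ A : Finset (Fin p → ℕ), IsMinMonRep x f A then ↑h.choose else ∅

/-- Embedding of exponent vectors into `ℝ^p`. -/
def toR (a : Fin p → ℕ) : Fin p → ℝ := fun i => (a i : ℝ)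

/-- The Newton polyhedron of a set of ring elements. -/
def Γ (x : Fin p → R) (S : Set R) : Set (Fin p → ℝ) :=
  convexHull ℝ (toR '' ⋃ f ∈ S, supp x f)

/-- The Newton polyhedron `Γ_x(I)` of an ideal. -/
def ΓI (x : Fin p → R) (I : Ideal R) : Set (Fin p → ℝ) := Γ x (I : Set R)

/-- The Newton polyhedron `Γ_x(f)` of an element: that of the principal ideal `(f)`. -/
def ΓE (x : Fin p → R) (f : R) : Set (Fin p → ℝ) := ΓI x (Ideal.span {f})

/-- The integral closure of an ideal `I`: elements satisfying an equation of integral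
dependence `f^n + a_1 f^{n-1} + ⋯ + a_n = 0` with `a_i ∈ I^i`. -/
def intClosure (I : Ideal R) : Set R :=
  {f | ∃ n : ℕ, 0 < n ∧ ∃ a : ℕ → R, (∀ i ∈ Finset.Icc 1 n, a i ∈ I ^ i) ∧
    f ^ n + ∑ i ∈ Finset.Icc 1 n, a i * f ^ (n - i) = 0}

/-- The monomial ideal `I_0` spanned by the lattice points of `Γ_x(I)`. -/
def idealZero (x : Fin p → R) (I : Ideal R) : Ideal R :=
  Ideal.span (mono x '' {a | toR a ∈ ΓI x I})

/-- The ideal `K_I` generated by the monomials lying in the integral closure of `I`. -/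
def KIdeal (x : Fin p → R) (I : Ideal R) : Ideal R :=
  Ideal.span {m | (∃ a : Fin p → ℕ, m = mono x a) ∧ m ∈ intClosure I}

section RegularMod

lemma mem_sup_span_singleton_iff {K : Ideal R} {u r : R} :
    r ∈ K ⊔ span {u} ↔ ∃ t, r - t * u ∈ K := by
  rw [sup_comm, mem_span_singleton_sup]
  constructor
  · rintro ⟨t, k, hk, rfl⟩
    exact ⟨t, by rwa [add_sub_cancel_left]⟩
  · rintro ⟨t, ht⟩
    exact ⟨t, _, ht, add_sub_cancel _ _⟩

/-- Multiplication by `y` is injective modulo the ideal `K`. -/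
def IsRegularMod (K : Ideal R) (y : R) : Prop := ∀ r, r * y ∈ K → r ∈ K

namespace IsRegularMod

variable {K : Ideal R} {y u v : R}

lemma pow (hu : IsRegularMod K u) (n : ℕ) : IsRegularMod K (u ^ n) := by
  induction n with
  | zero => intro r hr; simpa only [pow_zero, mul_one] using hr
  | succ n ih =>
    intro r hr
    rw [pow_succ, ← mul_assoc] at hr
    exact ih r (hu _ hr)

lemma sup_span_mul (hu : IsRegularMod K u) (hyu : IsRegularMod (K ⊔ span {u}) y)
    (hyv : IsRegularMod (K ⊔ span {v}) y) : IsRegularMod (K ⊔ span {u * v}) y := by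
  intro r hr
  have hle : K ⊔ span {u * v} ≤ K ⊔ span {u} :=
    sup_le_sup_left (span_singleton_le_span_singleton.mpr (dvd_mul_right u v)) K
  obtain ⟨t, ht⟩ := mem_sup_span_singleton_iff.mp (hyu r (hle hr))
  obtain ⟨c, hc⟩ := mem_sup_span_singleton_iff.mp hr
  have hcancel : t * y - c * v ∈ K := hu _ <| by
    have : (t * y - c * v) * u = (r * y - c * (u * v)) - y * (r - t * u) := by ring
    exact this ▸ sub_mem hc (K.mul_mem_left y ht)
  obtain ⟨d, hd⟩ := mem_sup_span_singleton_iff.mp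
    (hyv t (mem_sup_span_singleton_iff.mpr ⟨c, hcancel⟩))
  refine mem_sup_span_singleton_iff.mpr ⟨d, ?_⟩
  have : r - d * (u * v) = (r - t * u) + u * (t - d * v) := by ring
  exact this ▸ add_mem ht (K.mul_mem_left u hd)

lemma sup_span_pow (hu : IsRegularMod K u) (hyu : IsRegularMod (K ⊔ span {u}) y) (n : ℕ) :
    IsRegularMod (K ⊔ span {u ^ n}) y := by
  induction n with
  | zero => simp [IsRegularMod]
  | succ n ih =>
    rw [pow_succ']
    exact hu.sup_span_mul hyu ih

lemma mem_sup_of_mul_pow_mem (hu : IsRegularMod K u) {s : R} {n : ℕ}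
    (hs : s * u ^ n ∈ K ⊔ span {u ^ (n + 1)}) : s ∈ K ⊔ span {u} := by
  obtain ⟨t, ht⟩ := mem_sup_span_singleton_iff.mp hs
  refine mem_sup_span_singleton_iff.mpr ⟨t, hu.pow n _ ?_⟩
  have : (s - t * u) * u ^ n = s * u ^ n - t * u ^ (n + 1) := by ring
  exact this ▸ ht

end IsRegularMod

end RegularMod

section RegularFamily

/-- The order-free form of a permutable regular sequence: every member of the family is regular
modulo the ideal generated by any set of other members. -/
def IsRegularFamily {ι : Type*} (x : ι → R) : Prop :=
  ∀ (T : Set ι) (i : ι), i ∉ T → IsRegularMod (span (x '' T)) (x i)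

lemma exists_perm_image_lt_eq (T : Set (Fin p)) {i : Fin p} (hi : i ∉ T) :
    ∃ (σ : Equiv.Perm (Fin p)) (k : Fin p), σ k = i ∧ σ '' {j | j < k} = T := by
  classical
  let rank : Fin p → ℕ := fun k => if k ∈ T then 0 else if k = i then 1 else 2
  let σ := Tuple.sort rank
  have hσ : Monotone (rank ∘ σ) := Tuple.monotone_sort rank
  refine ⟨σ, σ.symm i, σ.apply_symm_apply i, ?_⟩
  ext t
  constructor
  · rintro ⟨j, hj, rfl⟩
    have hne : σ j ≠ i := fun h => hj.ne (σ.eq_symm_apply.mpr h)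
    have hrank := hσ (le_of_lt hj)
    by_contra hjT
    simp [rank, hi, hjT, hne] at hrank
  · intro ht
    refine ⟨σ.symm t, mem_ofPred.mpr (lt_of_not_ge fun hle => ?_), σ.apply_symm_apply t⟩
    have hrank := hσ hle
    simp [rank, hi, ht] at hrank

lemma isRegularFamily_of_forall_perm {x : Fin p → R}
    (hx : ∀ σ : Equiv.Perm (Fin p), IsRegSeq (x ∘ σ)) : IsRegularFamily x := by
  intro T i hi r hr
  obtain ⟨σ, k, rfl, rfl⟩ := exists_perm_image_lt_eq T hi
  rw [← image_comp] at hr ⊢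
  exact (hx σ).2 k r hr

namespace IsRegularFamily

variable {ι : Type*} {x : ι → R}

lemma isRegularMod_sup_span_pow (hx : IsRegularFamily x) (n : ι → ℕ) (S : Finset ι) (T : Set ι)
    (hTS : ∀ j ∈ S, j ∉ T) {i : ι} (hiT : i ∉ T) (hiS : i ∉ S) :
    IsRegularMod (span (x '' T) ⊔ span ((fun k => x k ^ n k) '' (S : Set ι))) (x i) := by
  classical
  induction S using Finset.induction_on generalizing T i with
  | empty => simpa using hx T i hiT
  | insert j S hjS ih =>
    rw [Finset.forall_mem_insert] at hTS
    rw [Finset.mem_insert, not_or] at hiS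
    have hj : IsRegularMod (span (x '' T) ⊔ span ((fun k => x k ^ n k) '' (S : Set ι))) (x j) :=
      ih T hTS.2 hTS.1 hjS
    have hi := ih (insert j T)
      (fun k hk => by
        rintro (rfl | hkT)
        exacts [hjS hk, hTS.2 k hk hkT])
      (by rintro (h | h); exacts [hiS.1 h, hiT h]) hiS.2
    rw [image_insert_eq, span_insert, sup_assoc, sup_comm] at hi
    rw [Finset.coe_insert, image_insert_eq, span_insert, sup_left_comm, sup_comm]
    exact hj.sup_span_pow hi (n j)

lemma mem_span_of_mul_prod_pow_mem (hx : IsRegularFamily x) (a : ι → ℕ) (S : Finset ι) {s : R}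
    (hs : s * ∏ i ∈ S, x i ^ a i ∈
      span (x '' (S : Set ι)ᶜ) ⊔ span ((fun k => x k ^ (a k + 1)) '' (S : Set ι))) :
    s ∈ span (range x) := by
  classical
  induction S using Finset.induction_on with
  | empty => simpa using hs
  | insert j S hjS ih =>
    apply ih
    have hreg := hx.isRegularMod_sup_span_pow (fun k => a k + 1) S (insert j (S : Set ι))ᶜ
      (fun k hk h => h (mem_insert_of_mem j hk)) (i := j) (fun h => h (mem_insert j _)) hjS
    rw [Finset.prod_insert hjS, mul_comm (x j ^ a j), ← mul_assoc, Finset.coe_insert,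
      image_insert_eq, span_insert, sup_left_comm, sup_comm] at hs
    have hcompl : (S : Set ι)ᶜ = insert j (insert j (S : Set ι))ᶜ := by
      ext k; by_cases hk : k = j <;> simp [hk, hjS]
    rw [hcompl, image_insert_eq, span_insert, sup_assoc, sup_comm]
    exact hreg.mem_sup_of_mul_pow_mem hs

end IsRegularFamily

end RegularFamily

section Monomials

variable (x : Fin p → R)

lemma mono_zero : mono x 0 = 1 := by
  simp [mono]

lemma mono_add (a b : Fin p → ℕ) : mono x (a + b) = mono x a * mono x b := by
  simp [mono, pow_add, Finset.prod_mul_distrib]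

lemma mono_single (i : Fin p) : mono x (Pi.single i 1) = x i := by
  classical
  simp [mono, Pi.single_apply, Finset.prod_ite_eq']

lemma mono_dvd_mono {a b : Fin p → ℕ} (h : a ≤ b) : mono x a ∣ mono x b :=
  Finset.prod_dvd_prod_of_dvd _ _ fun i _ => pow_dvd_pow (x i) (h i)

/-- The ideal generated by the monomials with exponent in `B`. -/
def monoIdeal (B : Set (Fin p → ℕ)) : Ideal R := span (mono x '' B)

variable {x} in
lemma mono_mem_monoIdeal {B : Set (Fin p → ℕ)} {a : Fin p → ℕ} (ha : a ∈ B) :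
    mono x a ∈ monoIdeal x B :=
  subset_span (mem_image_of_mem _ ha)

lemma mem_monoIdeal_iff {B : Set (Fin p → ℕ)} {f : R} :
    f ∈ monoIdeal x B ↔ ∃ t : Finset (Fin p → ℕ), ↑t ⊆ B ∧
      ∃ c : (Fin p → ℕ) → R, ∑ b ∈ t, c b * mono x b = f := by
  constructor
  · intro hf
    obtain ⟨c, hc, rfl⟩ := (Finsupp.mem_span_image_iff_linearCombination R).mp hf
    exact ⟨c.support, hc, c, rfl⟩
  · rintro ⟨t, ht, c, rfl⟩
    exact sum_mem fun b hb => mul_mem_left _ _ (mono_mem_monoIdeal (ht hb))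

lemma monoIdeal_mono {B C : Set (Fin p → ℕ)} (h : B ⊆ C) : monoIdeal x B ≤ monoIdeal x C :=
  span_mono (image_mono h)

lemma monoIdeal_mul (B C : Set (Fin p → ℕ)) :
    monoIdeal x B * monoIdeal x C = monoIdeal x (B + C) := by
  rw [monoIdeal, monoIdeal, span_mul_span', monoIdeal, ← image2_mul, ← image2_add,
    image_image2_distrib (mono_add x)]

lemma span_range_pow_eq_monoIdeal (N : ℕ) :
    span (range x) ^ N = monoIdeal x {b | ∑ i, b i = N} := by
  apply le_antisymm
  · induction N with
    | zero =>
      have : mono x 0 ∈ monoIdeal x {b | ∑ i, b i = 0} := mono_mem_monoIdeal (by simp)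
      rw [mono_zero, ← eq_top_iff_one] at this
      exact le_top.trans this.ge
    | succ N ih =>
      have hvars : span (range x) = monoIdeal x (range fun i => Pi.single i 1) := by
        rw [monoIdeal, ← range_comp]
        simp [Function.comp_def, mono_single]
      rw [pow_succ]
      refine (mul_mono_left ih).trans ?_
      rw [hvars, monoIdeal_mul]
      refine monoIdeal_mono x ?_
      rintro _ ⟨b, rfl, _, ⟨i, rfl⟩, rfl⟩
      simp [Finset.sum_add_distrib]
  · refine span_le.mpr ?_
    rintro _ ⟨b, rfl, rfl⟩
    rw [mono, ← Finset.prod_pow_eq_pow_sum]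
    exact prod_mem_prod fun i _ => pow_mem_pow (subset_span (mem_range_self i)) _

/-- The ideal `(x_1^{a_1+1}, …, x_p^{a_p+1})`. It contains the monomials that do not
divide `x^a`, so working modulo it singles out the coefficient of `x^a`. -/
def powerIdeal (a : Fin p → ℕ) : Ideal R := span (range fun i => x i ^ (a i + 1))

lemma mono_mem_powerIdeal {a b : Fin p → ℕ} (h : ¬ b ≤ a) : mono x b ∈ powerIdeal x a := by
  obtain ⟨i, hi⟩ : ∃ i, a i < b i := by simpa [Pi.le_def] using h
  exact mem_of_dvd _ ((pow_dvd_pow (x i) hi).trans (Finset.dvd_prod_of_mem _ (Finset.mem_univ i)))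
    (subset_span (mem_range_self i))

lemma monoIdeal_le_powerIdeal {B : Set (Fin p → ℕ)} {a : Fin p → ℕ} (h : ∀ b ∈ B, ¬ b ≤ a) :
    monoIdeal x B ≤ powerIdeal x a := by
  refine span_le.mpr ?_
  rintro _ ⟨b, hb, rfl⟩
  exact mono_mem_powerIdeal x (h b hb)

lemma sum_sub_mem_powerIdeal (c : (Fin p → ℕ) → R) {t : Finset (Fin p → ℕ)} {a : Fin p → ℕ}
    (ha : a ∈ t) (hle : ∀ b ∈ t, b ≤ a → b = a) :
    ∑ b ∈ t, c b * mono x b - c a * mono x a ∈ powerIdeal x a := by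
  classical
  rw [← Finset.add_sum_erase t _ ha, add_sub_cancel_left]
  refine sum_mem fun b hb => mul_mem_left _ _ (mono_mem_powerIdeal x fun hba => ?_)
  obtain ⟨hne, hbt⟩ := Finset.mem_erase.mp hb
  exact hne (hle b hbt hba)

lemma powerIdeal_antitone : Antitone (powerIdeal x) := by
  intro a c hac
  refine span_le.mpr ?_
  rintro _ ⟨i, rfl⟩
  exact mem_of_dvd _ (pow_dvd_pow (x i) (Nat.succ_le_succ (hac i)))
    (subset_span (mem_range_self i))

lemma mul_mono_mem_powerIdeal_add {a : Fin p → ℕ} {u : R} (hu : u ∈ powerIdeal x a)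
    (d : Fin p → ℕ) : u * mono x d ∈ powerIdeal x (a + d) := by
  refine Submodule.span_induction (fun y hy => ?_) (by simp)
    (fun y z _ _ hy hz => add_mul y z _ ▸ add_mem hy hz)
    (fun c y _ hy => by rw [smul_eq_mul, mul_assoc]; exact mul_mem_left _ c hy) hu
  obtain ⟨i, rfl⟩ := hy
  have hdvd : x i ^ ((a + d) i + 1) ∣ x i ^ (a i + 1) * mono x d := by
    rw [Pi.add_apply, add_right_comm, pow_add]
    exact mul_dvd_mul_left _ (Finset.dvd_prod_of_mem (fun k => x k ^ d k) (Finset.mem_univ i))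
  exact mem_of_dvd _ hdvd (subset_span (mem_range_self i))

variable {x}

lemma IsRegularFamily.mem_span_of_mul_mono_mem_powerIdeal (hx : IsRegularFamily x)
    {a : Fin p → ℕ} {s : R} (hs : s * mono x a ∈ powerIdeal x a) : s ∈ span (range x) :=
  hx.mem_span_of_mul_prod_pow_mem a Finset.univ (by simpa [mono, powerIdeal] using hs)

end Monomials

section Krull

lemma mem_of_forall_mem_sup_maximalIdeal_pow {L : Type*} [CommRing L] [IsLocalRing L]
    [IsNoetherianRing L] {K : Ideal L} {f : L}
    (hf : ∀ n : ℕ, f ∈ K ⊔ IsLocalRing.maximalIdeal L ^ n) : f ∈ K := by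
  have hzero : (Submodule.Quotient.mk f : L ⧸ K) ∈
      (⨅ n : ℕ, IsLocalRing.maximalIdeal L ^ n • ⊤ : Submodule L (L ⧸ K)) := by
    refine (Submodule.mem_iInf _).mpr fun n => ?_
    obtain ⟨k, hk, q, hq, rfl⟩ := Submodule.mem_sup.mp (hf n)
    have hkq : (Submodule.Quotient.mk (k + q) : L ⧸ K) = q • Submodule.Quotient.mk 1 := by
      rw [← Submodule.Quotient.mk_smul, Submodule.Quotient.eq, smul_eq_mul, mul_one,
        add_sub_cancel_right]
      exact hk
    rw [hkq]
    exact Submodule.smul_mem_smul hq trivial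
  rwa [iInf_pow_smul_eq_bot_of_isLocalRing _ (IsLocalRing.maximalIdeal.isMaximal L).ne_top,
    Submodule.mem_bot, Submodule.Quotient.mk_eq_zero] at hzero

lemma exists_mul_mem_of_forall_mem_sup_pow (P : Ideal R) [P.IsPrime]
    [IsNoetherianRing (Localization.AtPrime P)] {K : Ideal R} {f : R}
    (hf : ∀ n : ℕ, f ∈ K ⊔ P ^ n) : ∃ h ∉ P, h * f ∈ K := by
  let L := Localization.AtPrime P
  have hmap : algebraMap R L f ∈ K.map (algebraMap R L) :=
    mem_of_forall_mem_sup_maximalIdeal_pow fun n => by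
      have := mem_map_of_mem (algebraMap R L) (hf n)
      rwa [Ideal.map_sup, Ideal.map_pow, Localization.AtPrime.map_eq_maximalIdeal] at this
  exact (IsLocalization.algebraMap_mem_map_algebraMap_iff P.primeCompl L K f).mp hmap

end Krull

section LeadingExponents

variable {x : Fin p → R}

/-- `a` is a leading exponent of `f` if, up to multiples by elements outside `P = (x_1, …, x_p)`,
`f` is congruent to `r * x^a` with `r ∉ P` modulo monomials not dividing `x^a`. This describes
`supp x f` without choosing a monomial representation, see `supp_eq_setOf_isLeadingExp`. -/
def IsLeadingExp (x : Fin p → R) (f : R) (a : Fin p → ℕ) : Prop :=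
  ∃ h ∉ span (range x), ∃ r ∉ span (range x), h * f - r * mono x a ∈ powerIdeal x a

lemma IsMinMonRep.isLeadingExp {f : R} {A : Finset (Fin p → ℕ)} (hA : IsMinMonRep x f A)
    {a : Fin p → ℕ} (ha : a ∈ A) : IsLeadingExp x f a := by
  obtain ⟨⟨h, r, hh, hr, hf⟩, hmin⟩ := hA
  refine ⟨h, hh, r a, hr a ha, hf ▸ sum_sub_mem_powerIdeal x r ha fun b hb hba => ?_⟩
  by_contra hne
  exact hmin b hb a ha hne (mono_dvd_mono x hba)

lemma mem_monoIdeal_isLeadingExp_sup_pow (hP : span (range x) ≠ ⊤) (f : R) (N : ℕ) :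
    f ∈ monoIdeal x {a | IsLeadingExp x f a} ⊔ span (range x) ^ N := by
  induction N with
  | zero => simp
  | succ N ih =>
    obtain ⟨m, hm, q, hq, hmq⟩ := Submodule.mem_sup.mp ih
    rw [span_range_pow_eq_monoIdeal] at hq
    obtain ⟨t, ht, c, hc⟩ := (mem_monoIdeal_iff x).mp hq
    suffices hterm : ∀ b ∈ t, c b * mono x b ∈
        monoIdeal x {a | IsLeadingExp x f a} ⊔ span (range x) ^ (N + 1) by
      simpa only [hc, hmq] using add_mem (mem_sup_left hm) (sum_mem hterm)
    intro b hb
    by_cases hcb : c b ∈ span (range x)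
    · refine mem_sup_right ?_
      rw [pow_succ', span_range_pow_eq_monoIdeal]
      exact Ideal.mul_mem_mul hcb (mono_mem_monoIdeal (ht hb))
    obtain ⟨a, ha, hab⟩ : ∃ a, IsLeadingExp x f a ∧ a ≤ b := by
      by_contra! hnone
      have hm' : m ∈ powerIdeal x b := monoIdeal_le_powerIdeal x hnone hm
      have hothers : ∑ d ∈ t, c d * mono x d - c b * mono x b ∈ powerIdeal x b := by
        refine sum_sub_mem_powerIdeal x c hb fun d hd hdb => funext fun i => ?_
        have hdeg : ∑ i, d i = ∑ i, b i := (ht hd).trans (ht hb).symm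
        exact (Finset.sum_eq_sum_iff_of_le fun i _ => hdb i).mp hdeg i (Finset.mem_univ i)
      refine hnone b ⟨1, (ne_top_iff_one _).mp hP, c b, hcb, ?_⟩ le_rfl
      rw [one_mul, ← hmq, ← hc, add_sub_assoc]
      exact add_mem hm' hothers
    exact mem_sup_left <| mem_of_dvd _ ((mono_dvd_mono x hab).trans (dvd_mul_left _ _))
      (mono_mem_monoIdeal ha)

variable [hP : (span (range x)).IsPrime]

lemma IsLeadingExp.notMem_of_sub_mem (hx : IsRegularFamily x) {f k s : R} {a : Fin p → ℕ}
    (ha : IsLeadingExp x f a) (hk : k ∉ span (range x))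
    (hf : k * f - s * mono x a ∈ powerIdeal x a) : s ∉ span (range x) := by
  obtain ⟨h, -, r, hr, hfr⟩ := ha
  have hkr : k * r - h * s ∈ span (range x) := by
    refine hx.mem_span_of_mul_mono_mem_powerIdeal (a := a) ?_
    have : (k * r - h * s) * mono x a =
        h * (k * f - s * mono x a) - k * (h * f - r * mono x a) := by ring
    exact this ▸ sub_mem (mul_mem_left _ h hf) (mul_mem_left _ k hfr)
  exact fun hs => hP.mul_notMem hk hr ((Submodule.sub_mem_iff_left _ (mul_mem_left _ h hs)).mp hkr)

lemma IsLeadingExp.mul_notMem_powerIdeal (hx : IsRegularFamily x) {f k : R} {a : Fin p → ℕ}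
    (ha : IsLeadingExp x f a) (hk : k ∉ span (range x)) : k * f ∉ powerIdeal x a := fun hf =>
  ha.notMem_of_sub_mem hx hk (s := 0) (by rwa [zero_mul, sub_zero]) (zero_mem _)

lemma IsLeadingExp.eq_of_le (hx : IsRegularFamily x) {f : R} {a c : Fin p → ℕ}
    (ha : IsLeadingExp x f a) (hc : IsLeadingExp x f c) (hac : a ≤ c) : a = c := by
  obtain ⟨k, hk, s, -, hf⟩ := hc
  by_contra hne
  refine ha.mul_notMem_powerIdeal hx hk
    ((Submodule.sub_mem_iff_left _ (mul_mem_left _ s ?_)).mp (powerIdeal_antitone x hac hf))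
  exact mono_mem_powerIdeal x fun hca => hne (le_antisymm hac hca)

lemma IsLeadingExp.exists_le_of_mul_mem_monoIdeal (hx : IsRegularFamily x) {f k : R}
    {a : Fin p → ℕ} {B : Set (Fin p → ℕ)} (ha : IsLeadingExp x f a) (hk : k ∉ span (range x))
    (hf : k * f ∈ monoIdeal x B) : ∃ b ∈ B, b ≤ a := by
  by_contra! hB
  exact ha.mul_notMem_powerIdeal hx hk (monoIdeal_le_powerIdeal x hB hf)

lemma IsMinMonRep.coe_eq_setOf_isLeadingExp (hx : IsRegularFamily x) {f : R}
    {A : Finset (Fin p → ℕ)} (hA : IsMinMonRep x f A) :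
    (A : Set (Fin p → ℕ)) = {a | IsLeadingExp x f a} := by
  refine Subset.antisymm (fun a ha => hA.isLeadingExp ha) fun c hc => ?_
  obtain ⟨h, r, hh, -, hf⟩ := hA.1
  obtain ⟨a, ha, hac⟩ := hc.exists_le_of_mul_mem_monoIdeal hx hh
    ((mem_monoIdeal_iff x).mpr ⟨A, Subset.rfl, r, hf.symm⟩)
  exact (hA.isLeadingExp ha).eq_of_le hx hc hac ▸ ha

variable [IsNoetherianRing (Localization.AtPrime (span (range x)))]

lemma exists_mul_mem_monoIdeal_isLeadingExp (f : R) :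
    ∃ h ∉ span (range x), h * f ∈ monoIdeal x {a | IsLeadingExp x f a} :=
  exists_mul_mem_of_forall_mem_sup_pow _ (mem_monoIdeal_isLeadingExp_sup_pow hP.ne_top f)

lemma exists_isMinMonRep (hx : IsRegularFamily x) (f : R) : ∃ A, IsMinMonRep x f A := by
  obtain ⟨h, hh, hf⟩ := exists_mul_mem_monoIdeal_isLeadingExp (x := x) f
  obtain ⟨A, hA, c, hc⟩ := (mem_monoIdeal_iff x).mp hf
  have hanti : ∀ a ∈ A, ∀ b ∈ A, b ≤ a → b = a := fun a ha b hb hba =>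
    IsLeadingExp.eq_of_le hx (hA hb) (hA ha) hba
  refine ⟨A, ⟨h, c, hh, fun a ha => ?_, hc.symm⟩, fun a ha b hb hab hdvd => ?_⟩
  · exact (hA ha).notMem_of_sub_mem hx hh (hc ▸ sum_sub_mem_powerIdeal x c ha (hanti a ha))
  · have hxb : 1 * mono x b ∈ powerIdeal x b := by
      rw [one_mul]
      exact mem_of_dvd _ hdvd (mono_mem_powerIdeal x fun h => hab (hanti b hb a ha h))
    exact hP.one_notMem (hx.mem_span_of_mul_mono_mem_powerIdeal hxb)

lemma supp_eq_setOf_isLeadingExp (hx : IsRegularFamily x) (f : R) :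
    supp x f = {a | IsLeadingExp x f a} := by
  have h := exists_isMinMonRep hx f
  rw [supp, dif_pos h]
  exact h.choose_spec.coe_eq_setOf_isLeadingExp hx

end LeadingExponents

section IdealSupport

variable {x : Fin p → R}

/-- The union of the supports of the elements of `I`, whose convex hull is `ΓI x I`. -/
def idealSupp (x : Fin p → R) (I : Ideal R) : Set (Fin p → ℕ) := ⋃ f ∈ (I : Set R), supp x f

lemma ΓI_eq_convexHull_idealSupp (x : Fin p → R) (I : Ideal R) :
    ΓI x I = convexHull ℝ (toR '' idealSupp x I) := rfl

variable [hP : (span (range x)).IsPrime] [IsNoetherianRing (Localization.AtPrime (span (range x)))]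

lemma mem_idealSupp_iff_exists_isLeadingExp (hx : IsRegularFamily x) {I : Ideal R}
    {a : Fin p → ℕ} : a ∈ idealSupp x I ↔ ∃ f ∈ I, IsLeadingExp x f a := by
  simp [idealSupp, supp_eq_setOf_isLeadingExp hx]

lemma mem_idealSupp_iff_exists_mul_mono_mem (hx : IsRegularFamily x) {I : Ideal R}
    {a : Fin p → ℕ} :
    a ∈ idealSupp x I ↔ ∃ r ∉ span (range x), r * mono x a ∈ I ⊔ powerIdeal x a := by
  rw [mem_idealSupp_iff_exists_isLeadingExp hx]
  constructor
  · rintro ⟨f, hf, h, -, r, hr, hfr⟩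
    exact ⟨r, hr, sub_sub_cancel (h * f) (r * mono x a) ▸
      sub_mem (mem_sup_left (mul_mem_left _ h hf)) (mem_sup_right hfr)⟩
  · rintro ⟨r, hr, hra⟩
    obtain ⟨f, hf, u, hu, hfu⟩ := Submodule.mem_sup.mp hra
    refine ⟨f, hf, 1, hP.one_notMem, r, hr, ?_⟩
    rw [one_mul, ← hfu, sub_add_cancel_left]
    exact neg_mem hu

lemma isUpperSet_idealSupp (hx : IsRegularFamily x) (I : Ideal R) :
    IsUpperSet (idealSupp x I) := by
  intro a b hab ha
  rw [mem_idealSupp_iff_exists_mul_mono_mem hx] at ha ⊢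
  obtain ⟨d, rfl⟩ := exists_add_of_le hab
  obtain ⟨r, hr, hra⟩ := ha
  obtain ⟨f, hf, u, hu, hfu⟩ := Submodule.mem_sup.mp hra
  refine ⟨r, hr, ?_⟩
  rw [mono_add, ← mul_assoc, ← hfu, add_mul]
  exact add_mem (mem_sup_left (mul_mem_right _ I hf))
    (mem_sup_right (mul_mono_mem_powerIdeal_add x hu d))

lemma exists_mul_mem_monoIdeal_idealSupp (hx : IsRegularFamily x) {I : Ideal R} {f : R}
    (hf : f ∈ I) : ∃ h ∉ span (range x), h * f ∈ monoIdeal x (idealSupp x I) := by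
  obtain ⟨h, hh, hhf⟩ := exists_mul_mem_monoIdeal_isLeadingExp (x := x) f
  exact ⟨h, hh, monoIdeal_mono x
    (fun a ha => (mem_idealSupp_iff_exists_isLeadingExp hx).mpr ⟨f, hf, ha⟩) hhf⟩

lemma exists_mul_mem_monoIdeal_idealSupp_add (hx : IsRegularFamily x) {I J : Ideal R} {f : R}
    (hf : f ∈ I * J) :
    ∃ h ∉ span (range x), h * f ∈ monoIdeal x (idealSupp x I + idealSupp x J) := by
  induction hf using Submodule.mul_induction_on' with
  | mem_mul_mem f hf g hg =>
    obtain ⟨h, hh, hhf⟩ := exists_mul_mem_monoIdeal_idealSupp hx hf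
    obtain ⟨k, hk, hkg⟩ := exists_mul_mem_monoIdeal_idealSupp hx hg
    refine ⟨h * k, hP.mul_notMem hh hk, ?_⟩
    rw [← monoIdeal_mul, mul_mul_mul_comm]
    exact Ideal.mul_mem_mul hhf hkg
  | add f _ g _ hf hg =>
    obtain ⟨h, hh, hhf⟩ := hf
    obtain ⟨k, hk, hkg⟩ := hg
    refine ⟨h * k, hP.mul_notMem hh hk, ?_⟩
    have : h * k * (f + g) = k * (h * f) + h * (k * g) := by ring
    exact this ▸ add_mem (mul_mem_left _ k hhf) (mul_mem_left _ h hkg)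

lemma idealSupp_mul_subset (hx : IsRegularFamily x) (I J : Ideal R) :
    idealSupp x (I * J) ⊆ idealSupp x I + idealSupp x J := by
  intro c hc
  obtain ⟨f, hf, hfc⟩ := (mem_idealSupp_iff_exists_isLeadingExp hx).mp hc
  obtain ⟨h, hh, hhf⟩ := exists_mul_mem_monoIdeal_idealSupp_add hx hf
  obtain ⟨_, ⟨a, ha, b, hb, rfl⟩, hle⟩ := hfc.exists_le_of_mul_mem_monoIdeal hx hh hhf
  obtain ⟨d, rfl⟩ := exists_add_of_le hle
  exact ⟨a, ha, b + d, isUpperSet_idealSupp hx J le_self_add hb, (add_assoc a b d).symm⟩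

lemma exists_sub_mul_mono_mem_monoIdeal_diff (hx : IsRegularFamily x) {I : Ideal R}
    {a : Fin p → ℕ} (ha : a ∈ idealSupp x I) :
    ∃ f ∈ I, f ∈ monoIdeal x (idealSupp x I) ∧
      ∃ r ∉ span (range x), f - r * mono x a ∈ monoIdeal x (idealSupp x I \ {a}) := by
  obtain ⟨f, hf, hfa⟩ := (mem_idealSupp_iff_exists_isLeadingExp hx).mp ha
  obtain ⟨A, hA⟩ := exists_isMinMonRep hx f
  have hAsub : (A : Set (Fin p → ℕ)) ⊆ idealSupp x I := fun b hb =>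
    (mem_idealSupp_iff_exists_isLeadingExp hx).mpr ⟨f, hf, hA.isLeadingExp hb⟩
  have haA : a ∈ A := by
    rwa [← Finset.mem_coe, hA.coe_eq_setOf_isLeadingExp hx]
  obtain ⟨h, r, -, hr, hhf⟩ := hA.1
  refine ⟨h * f, mul_mem_left _ h hf, ?_, r a, hr a haA, ?_⟩
  · exact (mem_monoIdeal_iff x).mpr ⟨A, hAsub, r, hhf.symm⟩
  · rw [hhf, ← Finset.sum_erase_eq_sub haA]
    exact sum_mem fun b hb => mul_mem_left _ _ <| mono_mem_monoIdeal
      ⟨hAsub (Finset.mem_of_mem_erase hb), Finset.ne_of_mem_erase hb⟩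

lemma add_mem_idealSupp_mul (hx : IsRegularFamily x) {I J : Ideal R} {a b : Fin p → ℕ}
    (ha : a ∈ idealSupp x I) (hb : b ∈ idealSupp x J)
    (huniq : ∀ a' ∈ idealSupp x I, ∀ b' ∈ idealSupp x J, a' + b' ≤ a + b → a' = a ∧ b' = b) :
    a + b ∈ idealSupp x (I * J) := by
  obtain ⟨f, hfI, -, r, hr, hfr⟩ := exists_sub_mul_mono_mem_monoIdeal_diff hx ha
  obtain ⟨g, hgJ, hg, s, hs, hgs⟩ := exists_sub_mul_mono_mem_monoIdeal_diff hx hb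
  have hfr' : (f - r * mono x a) * g ∈ powerIdeal x (a + b) := by
    refine monoIdeal_le_powerIdeal x ?_ (monoIdeal_mul x _ _ ▸ Ideal.mul_mem_mul hfr hg)
    rintro _ ⟨a', ha', b', hb', rfl⟩ hle
    exact ha'.2 (huniq a' ha'.1 b' hb' hle).1
  have hgs' : mono x a * (g - s * mono x b) ∈ powerIdeal x (a + b) := by
    refine monoIdeal_le_powerIdeal x ?_
      (monoIdeal_mul x _ _ ▸ Ideal.mul_mem_mul (mono_mem_monoIdeal (mem_singleton a)) hgs)
    rintro _ ⟨_, rfl, b', hb', rfl⟩ hle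
    exact hb'.2 (huniq _ ha b' hb'.1 hle).2
  refine (mem_idealSupp_iff_exists_isLeadingExp hx).mpr
    ⟨f * g, Ideal.mul_mem_mul hfI hgJ, 1, hP.one_notMem, r * s, hP.mul_notMem hr hs, ?_⟩
  have : 1 * (f * g) - r * s * mono x (a + b) =
      (f - r * mono x a) * g + r * (mono x a * (g - s * mono x b)) := by
    rw [mono_add]
    ring
  exact this ▸ add_mem hfr' (mul_mem_left _ r hgs')

end IdealSupport

section Convexity

lemma toR_add (a b : Fin p → ℕ) : toR (a + b) = toR a + toR b :=
  funext fun _ => Nat.cast_add _ _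

lemma toR_image_add (U V : Set (Fin p → ℕ)) : toR '' (U + V) = toR '' U + toR '' V :=
  image_image2_distrib toR_add

lemma Ici_zero_subset_convexHull_range_toR :
    Ici 0 ⊆ convexHull ℝ (range (toR : (Fin p → ℕ) → Fin p → ℝ)) := by
  have hrange : range (toR : (Fin p → ℕ) → Fin p → ℝ) = univ.pi fun _ => range Nat.cast := by
    ext y
    simp [toR, funext_iff, Classical.skolem]
  rw [hrange, convexHull_pi]
  intro y hy i _
  have hcast (n : ℕ) : (n : ℝ) ∈ convexHull ℝ (range (Nat.cast : ℕ → ℝ)) :=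
    subset_convexHull _ _ (mem_range_self n)
  refine (convex_convexHull ℝ _).ordConnected.out (hcast 0) (hcast ⌈y i⌉₊) ⟨?_, Nat.le_ceil _⟩
  exact Nat.cast_zero.trans_le (hy i)

lemma convexHull_toR_image_eq_add_Ici {W : Set (Fin p → ℕ)} (hW : IsUpperSet W) :
    convexHull ℝ (toR '' W) = convexHull ℝ (toR '' {a | Minimal (· ∈ W) a}) + Ici 0 := by
  apply Subset.antisymm
  · refine convexHull_min ?_ ((convex_convexHull ℝ _).add (convex_Ici (𝕜 := ℝ) 0))
    rintro _ ⟨c, hc, rfl⟩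
    obtain ⟨a, hac, ha⟩ := exists_minimal_le_of_wellFoundedLT (· ∈ W) c hc
    obtain ⟨d, rfl⟩ := exists_add_of_le hac
    rw [toR_add]
    exact add_mem_add (subset_convexHull _ _ (mem_image_of_mem _ ha)) fun i => Nat.cast_nonneg _
  · refine (add_subset_add_left Ici_zero_subset_convexHull_range_toR).trans ?_
    rw [← image_univ, ← convexHull_add, ← toR_image_add]
    refine convexHull_mono (image_mono ?_)
    rintro _ ⟨a, ha, d, -, rfl⟩
    exact hW le_self_add ha.prop

lemma isClosed_convexHull_toR_image {W : Set (Fin p → ℕ)} (hW : IsUpperSet W) :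
    IsClosed (convexHull ℝ (toR '' W)) := by
  have hfin : {a | Minimal (· ∈ W) a}.Finite :=
    WellQuasiOrderedLE.finite_of_isAntichain (setOfPred_minimal_antichain _)
  rw [convexHull_toR_image_eq_add_Ici hW]
  exact isClosed_Ici.add_left_of_isCompact ((hfin.image toR).isCompact_convexHull ℝ)

lemma exists_monotone_forall_lt {W : Set (Fin p → ℕ)} (hW : IsUpperSet W) {u : Fin p → ℕ}
    (hu : toR u ∉ convexHull ℝ (toR '' W)) :
    ∃ ψ : (Fin p → ℕ) →+ ℝ, Monotone ψ ∧ ∀ c ∈ W, ψ u < ψ c := by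
  obtain rfl | ⟨a, ha⟩ := W.eq_empty_or_nonempty
  · exact ⟨0, monotone_const, by simp⟩
  obtain ⟨φ, v, huv, hv⟩ := geometric_hahn_banach_point_closed (convex_convexHull ℝ _)
    (isClosed_convexHull_toR_image hW) hu
  let ψ : (Fin p → ℕ) →+ ℝ :=
    { toFun := fun c => φ (toR c)
      map_zero' := by
        rw [← map_zero φ]
        exact congrArg φ (funext fun _ => Nat.cast_zero)
      map_add' := fun c d => by rw [toR_add, map_add] }
  have hψW : ∀ c ∈ W, v < ψ c := fun c hc =>
    hv _ (subset_convexHull _ _ (mem_image_of_mem _ hc))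
  have hψ_nonneg (d : Fin p → ℕ) : 0 ≤ ψ d := by
    by_contra! hneg
    obtain ⟨n, hn⟩ := Archimedean.arch (ψ a - v) (neg_pos.mpr hneg)
    have hlt := hψW (a + n • d) (hW le_self_add ha)
    rw [map_add, map_nsmul] at hlt
    rw [smul_neg] at hn
    linarith
  refine ⟨ψ, fun c e hce => ?_, fun c hc => huv.trans (hψW c hc)⟩
  obtain ⟨d, rfl⟩ := exists_add_of_le hce
  rw [map_add]
  exact le_add_of_nonneg_right (hψ_nonneg d)

end Convexity

section UniqueSums

lemma exists_forall_le_of_monotone {α β : Type*} [Preorder α] [WellQuasiOrderedLE α]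
    [LinearOrder β] {κ : α → β} (hκ : Monotone κ) {U : Set α} (hU : U.Nonempty) :
    ∃ a₀ ∈ U, ∀ a ∈ U, κ a₀ ≤ κ a := by
  have hwf : (κ '' U).IsWF :=
    (U.isPWO_of_wellQuasiOrderedLE.image_of_monotone hκ).isWF
  obtain ⟨a₀, ha₀, hmin⟩ := hwf.min_mem (hU.image κ)
  exact ⟨a₀, ha₀, fun a ha => hmin ▸ hwf.min_le _ (mem_image_of_mem κ ha)⟩

lemma exists_minimizers_unique_add {ψ : (Fin p → ℕ) →+ ℝ} (hψ : Monotone ψ)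
    {U V : Set (Fin p → ℕ)} (hU : U.Nonempty) (hV : V.Nonempty) :
    ∃ a₀ ∈ U, ∃ b₀ ∈ V, (∀ a ∈ U, ψ a₀ ≤ ψ a) ∧ (∀ b ∈ V, ψ b₀ ≤ ψ b) ∧
      ∀ a ∈ U, ∀ b ∈ V, a + b ≤ a₀ + b₀ → a = a₀ ∧ b = b₀ := by
  let κ : (Fin p → ℕ) → ℝ ×ₗ Lex (Fin p → ℕ) := fun a => toLex (ψ a, toLex a)
  have hκ_add (a b : Fin p → ℕ) : κ (a + b) = κ a + κ b := by
    simp only [κ, map_add]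
    rfl
  have hκ_mono : Monotone κ := fun a b hab =>
    Prod.Lex.toLex_mono ⟨hψ hab, Pi.toLex_monotone hab⟩
  have hκ_inj : Function.Injective κ := fun a b hab =>
    congrArg (fun z : ℝ ×ₗ Lex (Fin p → ℕ) => ofLex (ofLex z).2) hab
  have hψ_le {a b : Fin p → ℕ} (hab : κ a ≤ κ b) : ψ a ≤ ψ b := Prod.Lex.monotone_fst _ _ hab
  obtain ⟨a₀, ha₀, hmin_a⟩ := exists_forall_le_of_monotone hκ_mono hU
  obtain ⟨b₀, hb₀, hmin_b⟩ := exists_forall_le_of_monotone hκ_mono hV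
  refine ⟨a₀, ha₀, b₀, hb₀, fun a ha => hψ_le (hmin_a a ha), fun b hb => hψ_le (hmin_b b hb), ?_⟩
  intro a ha b hb hle
  have hκ_eq : κ a₀ + κ b₀ = κ a + κ b :=
    (add_le_add (hmin_a a ha) (hmin_b b hb)).antisymm (by
      simpa only [hκ_add] using hκ_mono hle)
  obtain ⟨hκa, hκb⟩ := (add_eq_add_iff_eq_and_eq (hmin_a a ha) (hmin_b b hb)).mp hκ_eq
  exact ⟨hκ_inj hκa.symm, hκ_inj hκb.symm⟩

lemma toR_image_add_subset_convexHull {U V W : Set (Fin p → ℕ)} (hW : IsUpperSet W)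
    (hUV : ∀ a ∈ U, ∀ b ∈ V,
      (∀ a' ∈ U, ∀ b' ∈ V, a' + b' ≤ a + b → a' = a ∧ b' = b) → a + b ∈ W) :
    toR '' (U + V) ⊆ convexHull ℝ (toR '' W) := by
  rintro _ ⟨_, ⟨a, ha, b, hb, rfl⟩, rfl⟩
  by_contra hab
  obtain ⟨ψ, hψ, hlt⟩ := exists_monotone_forall_lt hW hab
  obtain ⟨a₀, ha₀, b₀, hb₀, hmin_a, hmin_b, huniq⟩ :=
    exists_minimizers_unique_add hψ ⟨a, ha⟩ ⟨b, hb⟩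
  have := hlt _ (hUV a₀ ha₀ b₀ hb₀ huniq)
  simp only [map_add] at this
  exact this.not_ge (add_le_add (hmin_a a ha) (hmin_b b hb))

end UniqueSums

lemma IsGRSOP.isPrime_span_range {x : Fin p → R} (hx : IsGRSOP x) :
    (span (range x)).IsPrime := by
  have : IsDomain (R ⧸ span (x '' univ)) := (hx.2 univ).1
  rwa [image_univ, Ideal.Quotient.isDomain_iff_prime] at this

theorem newtonPolyhedron_ideal_mul_general (x : Fin p → R)
    (hx : ∀ σ : Equiv.Perm (Fin p), IsRegSeq (x ∘ σ)) [(span (range x)).IsPrime]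
    [IsNoetherianRing (Localization.AtPrime (span (range x)))] (I J : Ideal R) :
    ΓI x (I * J) = ΓI x I + ΓI x J := by
  have hreg : IsRegularFamily x := isRegularFamily_of_forall_perm hx
  rw [ΓI_eq_convexHull_idealSupp, ΓI_eq_convexHull_idealSupp, ΓI_eq_convexHull_idealSupp,
    ← convexHull_add, ← toR_image_add]
  refine Subset.antisymm (convexHull_mono (image_mono (idealSupp_mul_subset hreg I J)))
    (convexHull_min ?_ (convex_convexHull ℝ _))
  exact toR_image_add_subset_convexHull (isUpperSet_idealSupp hreg (I * J))
    fun a ha b hb huniq => add_mem_idealSupp_mul hreg ha hb huniq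

/-- `Γ_x(IJ) = Γ_x(I) + Γ_x(J)`, Minkowski sum. -/
theorem newtonPolyhedron_ideal_mul {R : Type*} [CommRing R] {p : ℕ}
    (x : Fin p → R) (hR : IsRegularDomain R) (hx : IsGRSOP x) (I J : Ideal R) :
    ΓI x (I * J) = ΓI x I + ΓI x J := by
  have : (span (range x)).IsPrime := hx.isPrime_span_range
  have : IsNoetherianRing (Localization.AtPrime (span (range x))) := (hR.2 _ this).1
  exact newtonPolyhedron_ideal_mul_general x hx.1 I J

end NND
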